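/- arXiv:1403.5509 — 5 statements merged into one kernel-verified Lean document; each statement's English description precedes it below -/
import Mathlib

section
/- Let V be a finite-dimensional complex vector space and d a natural number. The centralizer in End_ℂ(V^{⊗d}) of the subalgebra A spanned by the permutation operators of S_d equals the unital subalgebra B generated by the diagonal operators Σ_{i=1}^d a^{(i)} for a ∈ End_ℂ(V); that is, {T ∈ End_ℂ(V^{⊗d}) : T·S = S·T for all S ∈ A} = B. -/
open scoped TensorProduct

noncomputable section

/-- The permutation operator on `V^{⊗d}` induced by `σ ∈ S_d`:
`σ · (v₁ ⊗ ⋯ ⊗ v_d) = v_{σ⁻¹(1)} ⊗ ⋯ ⊗ v_{σ⁻¹(d)}`. -/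
def permOp (V : Type) [AddCommGroup V] [Module ℂ V] (d : ℕ) (σ : Equiv.Perm (Fin d)) :
    Module.End ℂ (⨂[ℂ] _ : Fin d, V) :=
  (PiTensorProduct.reindex ℂ (fun _ : Fin d => V) σ).toLinearMap

/-- The operator `a^{(i)}` acting by `a` in the `i`-th tensor factor and by the identity
elsewhere. -/
def slotOp (V : Type) [AddCommGroup V] [Module ℂ V] (d : ℕ) (i : Fin d)
    (a : Module.End ℂ V) : Module.End ℂ (⨂[ℂ] _ : Fin d, V) :=
  PiTensorProduct.map (Function.update (fun _ : Fin d => (LinearMap.id : V →ₗ[ℂ] V)) i a)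

/-- The diagonal operator `Σ_{i=1}^d a^{(i)}` on `V^{⊗d}`. -/
def diagOp (V : Type) [AddCommGroup V] [Module ℂ V] (d : ℕ) (a : Module.End ℂ V) :
    Module.End ℂ (⨂[ℂ] _ : Fin d, V) :=
  ∑ i : Fin d, slotOp V d i a

/-!
Averaging over `S_d` projects `End(V^{⊗d})` onto the centralizer of `S_d`. As `End(V^{⊗d})` is
spanned by the pure tensors `f₁ ⊗ ⋯ ⊗ f_d`, the centralizer is spanned by their symmetrizations.
These lie in the algebra generated by the diagonal operators, by induction on the number of factors
different from `1`: if `f₁, …, f_k` are given and all other factors are `1`, then multiplying the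
symmetrization by `Σᵢ a^{(i)}` yields `d - k` times the symmetrization with `a` put into one of the
free factors, plus symmetrizations in which `a` is absorbed by one of the `k` occupied factors, and
`d - k` is invertible.
-/

section Span

theorem exists_sum_smulRight_eq_id (R M : Type*) [CommSemiring R] [AddCommMonoid M] [Module R M]
    [Module.Finite R M] [Module.Projective R M] :
    ∃ (n : ℕ) (φ : Fin n → Module.Dual R M) (e : Fin n → M),
      ∑ k, (φ k).smulRight (e k) = LinearMap.id := by
  obtain ⟨n, f, g, -, -, hfg⟩ := Module.Finite.exists_comp_eq_id_of_projective R M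
  refine ⟨n, fun k => LinearMap.proj k ∘ₗ g, fun k => f (Pi.single k 1), ?_⟩
  ext x
  calc (∑ k, (LinearMap.proj k ∘ₗ g).smulRight (f (Pi.single k 1))) x
      = f (∑ k, g x k • Pi.single k 1) := by simp
    _ = f (g x) := by rw [← pi_eq_sum_univ' (g x)]
    _ = x := LinearMap.congr_fun hfg x

variable {R ι : Type*} [CommSemiring R] [Finite ι]
  {M N : ι → Type*} [∀ i, AddCommMonoid (M i)] [∀ i, Module R (M i)]
  [∀ i, AddCommMonoid (N i)] [∀ i, Module R (N i)]

theorem dualDistrib_smulRight_mem_span_range_map (φ : ∀ i, Module.Dual R (M i))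
    (x : ⨂[R] i, N i) :
    (PiTensorProduct.dualDistrib (⨂ₜ[R] i, φ i)).smulRight x ∈
      Submodule.span R (Set.range fun f : ∀ i, M i →ₗ[R] N i => PiTensorProduct.map f) := by
  have := Fintype.ofFinite ι
  have hle : Submodule.span R (Set.range (PiTensorProduct.tprod R)) ≤
      (Submodule.span R (Set.range fun f : ∀ i, M i →ₗ[R] N i => PiTensorProduct.map f)).comap
        (LinearMap.smulRightₗ (PiTensorProduct.dualDistrib (⨂ₜ[R] i, φ i))) := by
    refine Submodule.span_le.2 ?_
    rintro _ ⟨y, rfl⟩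
    refine Submodule.subset_span ⟨fun i => (φ i).smulRight (y i), ?_⟩
    ext v
    simp [MultilinearMap.map_smul_univ]
  exact hle ((PiTensorProduct.span_tprod_eq_top (R := R) (s := N)).symm ▸ Submodule.mem_top)

theorem span_range_piTensorProduct_map [∀ i, Module.Finite R (M i)]
    [∀ i, Module.Projective R (M i)] :
    Submodule.span R (Set.range fun f : ∀ i, M i →ₗ[R] N i => PiTensorProduct.map f) = ⊤ := by
  classical
  have := Fintype.ofFinite ι
  refine eq_top_iff.2 fun T _ => ?_
  choose n φ e hφe using fun i => exists_sum_smulRight_eq_id R (M i)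
  have hone : ∑ p : ∀ i, Fin (n i),
      PiTensorProduct.map (fun i => (φ i (p i)).smulRight (e i (p i))) = LinearMap.id := by
    rw [← PiTensorProduct.map_id]
    simp only [← hφe]
    exact ((PiTensorProduct.mapMultilinear R M M).map_sum
      fun i k => (φ i k).smulRight (e i k)).symm
  have hcomp (p : ∀ i, Fin (n i)) :
      T ∘ₗ PiTensorProduct.map (fun i => (φ i (p i)).smulRight (e i (p i))) =
        (PiTensorProduct.dualDistrib (⨂ₜ[R] i, φ i (p i))).smulRight
          (T (⨂ₜ[R] i, e i (p i))) := by
    ext v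
    simp [MultilinearMap.map_smul_univ]
  have hT : T = ∑ p : ∀ i, Fin (n i),
      T ∘ₗ PiTensorProduct.map (fun i => (φ i (p i)).smulRight (e i (p i))) := by
    conv_lhs => rw [← T.comp_id, ← hone]
    exact map_sum (LinearMap.compRight R T) _ _
  rw [hT]
  simp only [hcomp]
  exact sum_mem fun p _ => dualDistrib_smulRight_mem_span_range_map _ _

end Span

section Centralizer

variable {R : Type*}

theorem subalgebra_centralizer_span {A : Type*} [CommSemiring R] [Semiring A] [Algebra R A]
    (s : Set A) :
    Subalgebra.centralizer R (Submodule.span R s : Set A) = Subalgebra.centralizer R s := by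
  refine le_antisymm (Subalgebra.centralizer_le R _ _ Submodule.subset_span) fun x hx => ?_
  have hle : Submodule.span R s ≤ Subalgebra.toSubmodule (Subalgebra.centralizer R {x}) := by
    refine Submodule.span_le.2 fun y hy => ?_
    rintro _ rfl
    exact (hx y hy).symm
  exact fun y hy => (hle hy x rfl).symm

theorem mem_centralizer_range_iff_mem_invariants_linHom {G V : Type*} [CommRing R] [Group G]
    [AddCommGroup V] [Module R V] (ρ : Representation R G V) (T : Module.End R V) :
    T ∈ Subalgebra.centralizer R (Set.range ρ) ↔ T ∈ (ρ.linHom ρ).invariants := by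
  have hconj (g : G) : ρ g * T * ρ g⁻¹ = T ↔ ρ g * T = T * ρ g := by
    constructor <;> intro h
    · nth_rw 2 [← h]
      rw [mul_assoc, ← map_mul, inv_mul_cancel, map_one, mul_one]
    · rw [h, mul_assoc, ← map_mul, mul_inv_cancel, map_one, mul_one]
  simp only [Subalgebra.mem_centralizer_iff, Set.forall_mem_range,
    Representation.mem_invariants, Representation.linHom_apply, ← hconj]
  rfl

end Centralizer

section Operators

variable (R M ι : Type*) [CommSemiring R] [AddCommMonoid M] [Module R M]

/-- The representation of `Perm ι` on the tensor power `⨂[R] _ : ι, M` permuting the factors; this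
is `permOp` over an arbitrary semiring and index type. -/
def permRep : Representation R (Equiv.Perm ι) (⨂[R] _ : ι, M) where
  toFun σ := (PiTensorProduct.reindex R (fun _ => M) σ).toLinearMap
  map_one' := by
    ext v
    exact PiTensorProduct.reindex_tprod (s := fun _ : ι => M) (Equiv.refl ι) v
  map_mul' σ τ := LinearMap.ext fun x =>
    (PiTensorProduct.reindex_reindex (s := fun _ : ι => M) τ σ x).symm

variable {R M ι}

theorem permRep_mul_map (σ : Equiv.Perm ι) (f : ι → Module.End R M) :
    permRep R M ι σ * PiTensorProduct.map f =
      PiTensorProduct.map (f ∘ σ.symm) * permRep R M ι σ :=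
  (PiTensorProduct.map_comp_reindex_eq f σ).symm

variable [Fintype ι] [DecidableEq ι]

/-- The diagonal operator `Σ i, a^{(i)}` on the tensor power `⨂[R] _ : ι, M`; this is `diagOp` over
an arbitrary semiring and finite index type. -/
def diagEnd (a : Module.End R M) : Module.End R (⨂[R] _ : ι, M) :=
  ∑ i, PiTensorProduct.map (Pi.mulSingle i a)

/-- The symmetrization `Σ_σ f_{σ(1)} ⊗ ⋯ ⊗ f_{σ(d)}` of a pure tensor of endomorphisms, without the
factor `1 / d!`. -/
def symmetrizedMap (f : ι → Module.End R M) : Module.End R (⨂[R] _ : ι, M) :=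
  ∑ σ : Equiv.Perm ι, PiTensorProduct.map (f ∘ σ)

theorem permRep_mul_diagEnd (σ : Equiv.Perm ι) (a : Module.End R M) :
    permRep R M ι σ * diagEnd a = diagEnd a * permRep R M ι σ := by
  simp only [diagEnd, Finset.mul_sum, Finset.sum_mul, permRep_mul_map, Pi.mulSingle_comp_equiv]
  exact Fintype.sum_equiv σ _ _ fun i => rfl

theorem symmetrizedMap_comp_perm (f : ι → Module.End R M) (τ : Equiv.Perm ι) :
    symmetrizedMap (f ∘ τ) = symmetrizedMap f :=
  Fintype.sum_equiv (Equiv.mulLeft τ) _ _ fun _ => rfl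

theorem symmetrizedMap_mul_diagEnd (f : ι → Module.End R M) (a : Module.End R M) :
    symmetrizedMap f * diagEnd a = ∑ i, symmetrizedMap (f * Pi.mulSingle i a) := by
  have hcomp (σ : Equiv.Perm ι) (i : ι) :
      PiTensorProduct.map (f ∘ σ) * PiTensorProduct.map (Pi.mulSingle i a) =
        PiTensorProduct.map ((f * Pi.mulSingle (σ i) a) ∘ σ) := by
    rw [Pi.mul_comp, Pi.mulSingle_comp_equiv, σ.symm_apply_apply]
    exact (PiTensorProduct.map_mul _ _).symm
  simp only [symmetrizedMap, diagEnd, Finset.sum_mul_sum, hcomp]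
  rw [Finset.sum_comm (s := Finset.univ (α := ι))]
  exact Finset.sum_congr rfl fun σ _ => Fintype.sum_equiv σ _ _ fun i => rfl

theorem symmetrizedMap_mul_mulSingle_eq {f : ι → Module.End R M} {i j : ι} (h : f i = f j)
    (a : Module.End R M) :
    symmetrizedMap (f * Pi.mulSingle i a) = symmetrizedMap (f * Pi.mulSingle j a) := by
  have hswap : f ∘ Equiv.swap i j = f := by
    rw [Equiv.comp_swap_eq_update, h, Function.update_eq_self, ← h, Function.update_eq_self]
  have hcomp : (f * Pi.mulSingle i a) ∘ Equiv.swap i j = f * Pi.mulSingle j a := by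
    rw [Pi.mul_comp, hswap, Pi.mulSingle_comp_equiv, Equiv.symm_swap, Equiv.swap_apply_left]
  rw [← hcomp, symmetrizedMap_comp_perm]

theorem symmetrizedMap_mul_diagEnd_of_notMem {f : ι → Module.End R M} {s : Finset ι}
    (hf : ∀ i ∉ s, f i = 1) {j : ι} (hj : j ∉ s) (a : Module.End R M) :
    symmetrizedMap f * diagEnd a =
      ∑ i ∈ s, symmetrizedMap (f * Pi.mulSingle i a) +
        (sᶜ.card : R) • symmetrizedMap (f * Pi.mulSingle j a) := by
  have hcompl : ∀ i ∈ sᶜ,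
      symmetrizedMap (f * Pi.mulSingle i a) = symmetrizedMap (f * Pi.mulSingle j a) :=
    fun i hi => symmetrizedMap_mul_mulSingle_eq
      ((hf i (Finset.mem_compl.1 hi)).trans (hf j hj).symm) a
  rw [symmetrizedMap_mul_diagEnd, ← Finset.sum_add_sum_compl s, Finset.sum_congr rfl hcompl,
    Finset.sum_const, Nat.cast_smul_eq_nsmul]

end Operators

section DiagonalAlgebra

theorem isUnit_natCast_of_le_of_isUnit_factorial {R : Type*} [CommSemiring R] {m n : ℕ}
    (hn : IsUnit (n.factorial : R)) (hm : 0 < m) (hmn : m ≤ n) : IsUnit (m : R) :=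
  isUnit_of_dvd_unit (Nat.cast_dvd_cast (Nat.dvd_factorial hm hmn)) hn

variable {R M ι : Type*} [CommRing R] [AddCommGroup M] [Module R M] [Fintype ι] [DecidableEq ι]

theorem symmetrizedMap_mem_adjoin_of_support (hι : IsUnit ((Fintype.card ι).factorial : R))
    (s : Finset ι) {f : ι → Module.End R M} (hf : ∀ i ∉ s, f i = 1) :
    symmetrizedMap f ∈ Algebra.adjoin R (Set.range (diagEnd (R := R) (M := M) (ι := ι))) := by
  induction s using Finset.induction_on generalizing f with
  | empty =>
    obtain rfl : f = 1 := funext fun i => hf i (Finset.notMem_empty i)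
    refine sum_mem fun σ _ => ?_
    rw [Pi.one_comp]
    exact PiTensorProduct.map_one (R := R) (s := fun _ : ι => M) ▸ one_mem _
  | insert j s hj ih =>
    set g := Function.update f j 1 with hg
    have hgs : ∀ i ∉ s, g i = 1 := by
      intro i hi
      rcases eq_or_ne i j with rfl | hij
      · exact Function.update_self ..
      · rw [hg, Function.update_of_ne hij, hf i (by simp [hij, hi])]
    have hfg : g * Pi.mulSingle j (f j) = f := by
      ext1 i
      rcases eq_or_ne i j with rfl | hij <;> simp [*]
    have hunit : IsUnit (sᶜ.card : R) :=
      isUnit_natCast_of_le_of_isUnit_factorial hι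
        (Finset.card_pos.2 ⟨j, Finset.mem_compl.2 hj⟩) (Finset.card_le_univ _)
    have hmul := symmetrizedMap_mul_diagEnd_of_notMem hgs hj (f j)
    rw [hfg, ← sub_eq_iff_eq_add'] at hmul
    rw [← Subalgebra.mem_toSubmodule, ← Submodule.smul_mem_iff_of_isUnit _ hunit,
      Subalgebra.mem_toSubmodule, ← hmul]
    refine sub_mem (mul_mem (ih hgs) (Algebra.subset_adjoin ⟨f j, rfl⟩))
      (sum_mem fun i hi => ih fun k hk => ?_)
    rw [Pi.mul_apply, hgs k hk, Pi.mulSingle_eq_of_ne (ne_of_mem_of_not_mem hi hk).symm, one_mul]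

theorem averageMap_linHom_permRep_map [Invertible (Fintype.card (Equiv.Perm ι) : R)]
    (f : ι → Module.End R M) :
    ((permRep R M ι).linHom (permRep R M ι)).averageMap (PiTensorProduct.map f) =
      ⅟(Fintype.card (Equiv.Perm ι) : R) • symmetrizedMap f := by
  have hconj (σ : Equiv.Perm ι) :
      (permRep R M ι).linHom (permRep R M ι) σ (PiTensorProduct.map f) =
        PiTensorProduct.map (f ∘ σ.symm) := by
    change permRep R M ι σ * (PiTensorProduct.map f * permRep R M ι σ⁻¹) = _
    rw [← mul_assoc, permRep_mul_map, mul_assoc, ← map_mul, mul_inv_cancel, map_one, mul_one]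
  simp only [Representation.averageMap, GroupAlgebra.average, map_smul, map_sum,
    Representation.asAlgebraHom_of, LinearMap.smul_apply, LinearMap.sum_apply, hconj]
  exact congrArg _ (Fintype.sum_equiv (Equiv.inv _) _ _ fun σ => rfl)

variable [Module.Finite R M] [Module.Projective R M]

theorem averageMap_linHom_permRep_mem_adjoin [Invertible (Fintype.card (Equiv.Perm ι) : R)]
    (T : Module.End R (⨂[R] _ : ι, M)) :
    ((permRep R M ι).linHom (permRep R M ι)).averageMap T ∈
      Algebra.adjoin R (Set.range (diagEnd (R := R) (M := M) (ι := ι))) := by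
  have hι : IsUnit ((Fintype.card ι).factorial : R) :=
    Fintype.card_perm (α := ι) ▸ isUnit_of_invertible _
  have hle : Submodule.span R
        (Set.range fun f : ι → Module.End R M => PiTensorProduct.map f) ≤
      (Subalgebra.toSubmodule (Algebra.adjoin R (Set.range diagEnd))).comap
        ((permRep R M ι).linHom (permRep R M ι)).averageMap := by
    refine Submodule.span_le.2 ?_
    rintro _ ⟨f, rfl⟩
    rw [SetLike.mem_coe, Submodule.mem_comap, averageMap_linHom_permRep_map]
    exact Submodule.smul_mem _ _ (symmetrizedMap_mem_adjoin_of_support hι Finset.univ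
      fun i hi => absurd (Finset.mem_univ i) hi)
  exact hle ((span_range_piTensorProduct_map (R := R) (M := fun _ : ι => M)
    (N := fun _ => M)).symm ▸ Submodule.mem_top)

theorem schur_weyl_centralizer_of_symmetric_group_general
    (hι : IsUnit ((Fintype.card ι).factorial : R)) :
    Subalgebra.centralizer R (Submodule.span R (Set.range (permRep R M ι)) :
        Set (Module.End R (⨂[R] _ : ι, M))) =
      Algebra.adjoin R (Set.range diagEnd) := by
  rw [subalgebra_centralizer_span]
  apply le_antisymm
  · intro T hT
    have : Invertible (Fintype.card (Equiv.Perm ι) : R) :=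
      (Fintype.card_perm (α := ι) ▸ hι).invertible
    rw [mem_centralizer_range_iff_mem_invariants_linHom] at hT
    rw [← Representation.averageMap_id _ T hT]
    exact averageMap_linHom_permRep_mem_adjoin T
  · refine Algebra.adjoin_le ?_
    rintro _ ⟨a, rfl⟩ _ ⟨σ, rfl⟩
    exact permRep_mul_diagEnd σ a

end DiagonalAlgebra

section Complex

variable (V : Type) [AddCommGroup V] [Module ℂ V] (d : ℕ)

theorem setOf_eq_permOp_eq_range_permRep :
    {S | ∃ σ : Equiv.Perm (Fin d), S = permOp V d σ} = Set.range (permRep ℂ V (Fin d)) :=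
  Set.ext fun _ => exists_congr fun _ => eq_comm

theorem setOf_eq_diagOp_eq_range_diagEnd :
    {S | ∃ a : Module.End ℂ V, S = diagOp V d a} = Set.range diagEnd :=
  Set.ext fun _ => exists_congr fun _ => eq_comm

end Complex

/-- Schur-Weyl duality, first half: the centralizer of the subalgebra `A` spanned by the
permutation operators of `S_d` on `V^{⊗d}` is the unital subalgebra `B` generated by the
diagonal operators `Σ_i a^{(i)}`, `a ∈ End(V)`. -/
theorem schur_weyl_centralizer_of_symmetric_group
    (V : Type) [AddCommGroup V] [Module ℂ V] [FiniteDimensional ℂ V] (d : ℕ) :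
    {T : Module.End ℂ (⨂[ℂ] _ : Fin d, V) |
        ∀ S ∈ Submodule.span ℂ {S | ∃ σ : Equiv.Perm (Fin d), S = permOp V d σ},
          T * S = S * T}
      = (Algebra.adjoin ℂ {S | ∃ a : Module.End ℂ V, S = diagOp V d a} : Set _) := by
  rw [setOf_eq_permOp_eq_range_permRep, setOf_eq_diagOp_eq_range_diagEnd,
    ← schur_weyl_centralizer_of_symmetric_group_general
      (Nat.cast_ne_zero.2 (Nat.factorial_ne_zero _)).isUnit]
  exact Set.ext fun T => forall₂_congr fun _ _ => eq_comm
end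
end

section
/- Let V be a finite-dimensional complex vector space and d a natural number. Then V^{⊗d} is a semisimple module over the unital subalgebra B of End_ℂ(V^{⊗d}) generated by the diagonal operators Σ_{i=1}^d a^{(i)} (a ∈ End_ℂ(V)); equivalently, every linear subspace of V^{⊗d} invariant under all the operators Σ_{i=1}^d a^{(i)} admits a complementary subspace invariant under all these operators (V^{⊗d} is a semisimple gl(V)-module under the diagonal action). -/
open scoped TensorProduct

noncomputable section

/-! Weyl's unitary trick: give each tensor factor the inner product for which a chosen basis is
orthonormal, and the tensor product the one for which the product basis is orthonormal. The adjoint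
of `f₁ ⊗ ⋯ ⊗ f_d` is then `f₁† ⊗ ⋯ ⊗ f_d†`, so that the adjoint of `Σ_i a^{(i)}` is
`Σ_i (a†)^{(i)}`, and the orthogonal complement of an invariant subspace is invariant. -/

section BasisAdjoint

variable {R M κ : Type*} [CommSemiring R] [StarRing R] [AddCommMonoid M] [Module R M]
  [Fintype κ] [DecidableEq κ] (b : Module.Basis κ R M)

/-- The adjoint of `f` for the Hermitian form in which the basis `b` is orthonormal, defined through
its matrix so that no inner product has to be put on `M`. -/
def basisAdjoint (f : Module.End R M) : Module.End R M :=
  Matrix.toLin b b (LinearMap.toMatrix b b f).conjTranspose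

lemma toMatrix_basisAdjoint (f : Module.End R M) :
    LinearMap.toMatrix b b (basisAdjoint b f) = (LinearMap.toMatrix b b f).conjTranspose :=
  LinearMap.toMatrix_toLin b b _

lemma basisAdjoint_id : basisAdjoint b LinearMap.id = LinearMap.id := by
  simp [basisAdjoint]

lemma basisAdjoint_sum {ι : Type*} (s : Finset ι) (f : ι → Module.End R M) :
    basisAdjoint b (∑ i ∈ s, f i) = ∑ i ∈ s, basisAdjoint b (f i) := by
  simp [basisAdjoint, Matrix.conjTranspose_sum]

end BasisAdjoint

section TensorProduct

variable {R ι : Type*} [CommSemiring R] [Fintype ι] [DecidableEq ι] {M κ : ι → Type*}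
  [∀ i, AddCommMonoid (M i)] [∀ i, Module R (M i)] [∀ i, Fintype (κ i)] [∀ i, DecidableEq (κ i)]

lemma toMatrix_piTensorProduct_map {N μ : ι → Type*} [∀ i, AddCommMonoid (N i)]
    [∀ i, Module R (N i)] [∀ i, Finite (μ i)] (b : ∀ i, Module.Basis (κ i) R (M i))
    (c : ∀ i, Module.Basis (μ i) R (N i)) (f : ∀ i, M i →ₗ[R] N i)
    (p : ∀ i, μ i) (q : ∀ i, κ i) :
    LinearMap.toMatrix (Basis.piTensorProduct b) (Basis.piTensorProduct c)
        (PiTensorProduct.map f) p q =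
      ∏ i, LinearMap.toMatrix (b i) (c i) (f i) (p i) (q i) := by
  simp only [LinearMap.toMatrix_apply, Basis.piTensorProduct_apply, PiTensorProduct.map_tprod,
    Basis.piTensorProduct_repr_tprod_apply]

/-- The action `Σ_i 1 ⊗ ⋯ ⊗ f_i ⊗ ⋯ ⊗ 1` of `(f_i)_i ∈ Π_i gl(M_i)` on `⨂_i M_i`; the operator
`diagOp` is the case of a constant family. -/
def slotSum (f : ∀ i, Module.End R (M i)) : Module.End R (⨂[R] i, M i) :=
  ∑ i, PiTensorProduct.map (Function.update (fun _ => LinearMap.id) i (f i))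

variable [StarRing R] (b : ∀ i, Module.Basis (κ i) R (M i))

lemma basisAdjoint_piTensorProduct_map (f : ∀ i, Module.End R (M i)) :
    basisAdjoint (Basis.piTensorProduct b) (PiTensorProduct.map f) =
      PiTensorProduct.map fun i => basisAdjoint (b i) (f i) := by
  apply (LinearMap.toMatrix (Basis.piTensorProduct b) (Basis.piTensorProduct b)).injective
  ext p q
  simp only [toMatrix_basisAdjoint, Matrix.conjTranspose_apply, toMatrix_piTensorProduct_map,
    star_prod]

lemma basisAdjoint_slotSum (f : ∀ i, Module.End R (M i)) :
    basisAdjoint (Basis.piTensorProduct b) (slotSum f) =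
      slotSum fun i => basisAdjoint (b i) (f i) := by
  simp only [slotSum, basisAdjoint_sum, basisAdjoint_piTensorProduct_map,
    Function.apply_update (fun i => basisAdjoint (b i)), basisAdjoint_id]

end TensorProduct

section UnitaryTrick

variable {𝕜 E κ : Type*} [RCLike 𝕜] [AddCommGroup E] [Module 𝕜 E] [Fintype κ]
  (b : Module.Basis κ 𝕜 E)

/-- Coordinates with respect to `b`, with values in Euclidean space: `E` is compared with an inner
product space through this map instead of being given a norm. -/
def euclideanCoord : E ≃ₗ[𝕜] EuclideanSpace 𝕜 κ :=
  b.equivFun ≪≫ₗ (WithLp.linearEquiv 2 𝕜 (κ → 𝕜)).symm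

lemma isCompl_comap_orthogonal_map {F : Type*} [NormedAddCommGroup F] [InnerProductSpace 𝕜 F]
    (e : E ≃ₗ[𝕜] F) (W : Submodule 𝕜 E) [(W.map e.toLinearMap).HasOrthogonalProjection] :
    IsCompl W ((W.map e.toLinearMap)ᗮ.comap e.toLinearMap) := by
  have h := (Submodule.orderIsoMapComap e).symm.isCompl
    (W.map e.toLinearMap).isCompl_orthogonal
  rwa [show (Submodule.orderIsoMapComap e).symm (W.map e.toLinearMap) = W from
    Submodule.comap_map_eq_of_injective e.injective W] at h

variable [DecidableEq κ]

lemma euclideanCoord_end_apply (f : Module.End 𝕜 E) (x : E) :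
    euclideanCoord b (f x) =
      Matrix.toEuclideanLin (LinearMap.toMatrix b b f) (euclideanCoord b x) := by
  ext k
  simpa [euclideanCoord] using (congrFun (LinearMap.toMatrix_mulVec_repr b b f x) k).symm

lemma inner_euclideanCoord_basisAdjoint (f : Module.End 𝕜 E) (x y : E) :
    inner 𝕜 (euclideanCoord b (basisAdjoint b f x)) (euclideanCoord b y) =
      inner 𝕜 (euclideanCoord b x) (euclideanCoord b (f y)) := by
  rw [euclideanCoord_end_apply, toMatrix_basisAdjoint,
    Matrix.toEuclideanLin_conjTranspose_eq_adjoint, LinearMap.adjoint_inner_left,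
    euclideanCoord_end_apply]

theorem exists_isCompl_invariant_of_basisAdjoint {α : Type*} (T : α → Module.End 𝕜 E)
    (hT : ∀ a, ∃ a', T a' = basisAdjoint b (T a))
    (W : Submodule 𝕜 E) (hW : ∀ a, ∀ x ∈ W, T a x ∈ W) :
    ∃ W' : Submodule 𝕜 E, (∀ a, ∀ x ∈ W', T a x ∈ W') ∧ IsCompl W W' := by
  refine ⟨_, fun a x hx => ?_, isCompl_comap_orthogonal_map (euclideanCoord b) W⟩
  obtain ⟨a', ha'⟩ := hT a
  rintro _ ⟨w, hw, rfl⟩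
  have h_adjoint : inner 𝕜 (euclideanCoord b (T a' w)) (euclideanCoord b x) = 0 :=
    hx _ (Submodule.mem_map_of_mem (hW a' w hw))
  rwa [ha', inner_euclideanCoord_basisAdjoint] at h_adjoint

end UnitaryTrick

theorem isSemisimple_tensorPower_glV_general {𝕜 ι α : Type*} [RCLike 𝕜] [Fintype ι]
    [DecidableEq ι] {V κ : ι → Type*} [∀ i, AddCommGroup (V i)] [∀ i, Module 𝕜 (V i)]
    [∀ i, Fintype (κ i)] [∀ i, DecidableEq (κ i)] (b : ∀ i, Module.Basis (κ i) 𝕜 (V i))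
    (ρ : α → ∀ i, Module.End 𝕜 (V i))
    (hρ : ∀ a, ∃ a', ∀ i, ρ a' i = basisAdjoint (b i) (ρ a i)) :
    ∀ W : Submodule 𝕜 (⨂[𝕜] i, V i),
      (∀ a, ∀ x ∈ W, slotSum (ρ a) x ∈ W) →
        ∃ W' : Submodule 𝕜 (⨂[𝕜] i, V i),
          (∀ a, ∀ x ∈ W', slotSum (ρ a) x ∈ W') ∧ IsCompl W W' := by
  refine exists_isCompl_invariant_of_basisAdjoint (Basis.piTensorProduct b) _ fun a => ?_
  obtain ⟨a', ha'⟩ := hρ a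
  exact ⟨a', by rw [basisAdjoint_slotSum, funext ha']⟩

/-- `V^{⊗d}` is semisimple as a module over the algebra generated by the diagonal
`gl(V)`-action: every subspace invariant under all operators `Σ_i a^{(i)}` admits an invariant
complement. -/
theorem isSemisimple_tensorPower_glV
    (V : Type) [AddCommGroup V] [Module ℂ V] [FiniteDimensional ℂ V] (d : ℕ) :
    ∀ W : Submodule ℂ (⨂[ℂ] _ : Fin d, V),
      (∀ a : Module.End ℂ V, ∀ x ∈ W, diagOp V d a x ∈ W) →
        ∃ W' : Submodule ℂ (⨂[ℂ] _ : Fin d, V),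
          (∀ a : Module.End ℂ V, ∀ x ∈ W', diagOp V d a x ∈ W') ∧ IsCompl W W' :=
  isSemisimple_tensorPower_glV_general (fun _ => Module.finBasis ℂ V) (fun a _ => a)
    fun a => ⟨basisAdjoint (Module.finBasis ℂ V) a, fun _ => rfl⟩
end
end

section
/- If ν ∈ ℂ is not a nonnegative integer, then any two ν-equivalent partitions are equal; that is, every ∼ν-equivalence class of Young diagrams consists of exactly one diagram. -/
/-- A partition (Young diagram): a weakly decreasing function `λ : {1,2,…} → ℕ` with
`λ_i = 0` for all sufficiently large `i`. -/
structure NPartition where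
  /-- the entries `λ_1 ≥ λ_2 ≥ ⋯` of the partition -/
  toFun : ℕ+ → ℕ
  antitone' : ∀ ⦃i j : ℕ+⦄, i ≤ j → toFun j ≤ toFun i
  eventually_zero' : ∃ N : ℕ+, ∀ i : ℕ+, N ≤ i → toFun i = 0

/-- `|λ| = Σ_{i ≥ 1} λ_i`. -/
noncomputable def NPartition.size (l : NPartition) : ℕ := ∑ᶠ i : ℕ+, l.toFun i

/-- The sequence `μ_λ(ν)` with `μ_λ(ν)_0 = ν − |λ|` and `μ_λ(ν)_i = λ_i − i` for `i ≥ 1`. -/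
noncomputable def muSeq (ν : ℂ) (l : NPartition) : ℕ → ℂ := fun i =>
  if h : i = 0 then ν - (l.size : ℂ)
  else (l.toFun ⟨i, Nat.pos_of_ne_zero h⟩ : ℂ) - (i : ℂ)

/-- `λ ∼ν λ'`: there is a bijection `f : ℕ → ℕ` with `μ_λ(ν)_i = μ_{λ'}(ν)_{f(i)}` for all
`i ∈ ℕ`. -/
def nuEquiv (ν : ℂ) (l l' : NPartition) : Prop :=
  ∃ f : ℕ ≃ ℕ, ∀ i : ℕ, muSeq ν l i = muSeq ν l' (f i)

/-!
The strictly decreasing sequence `λ_i - i`, `i ≥ 1`, is determined by its range `B ⊆ ℤ`, so `λ` is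
determined by `B`. The range of `μ_λ(ν)` is `B ∪ {ν - |λ|}`, and `B` is exactly its integer part
unless `ν` is a nonnegative integer: `ν - |λ|` is either not an integer or less than `-|λ|`, and `B`
contains every integer less than `-|λ|` because `λ_i = 0` for `i > |λ|`.
-/

namespace NPartition

theorem toFun_injective : Function.Injective toFun := by
  rintro ⟨_, _, _⟩ ⟨_, _, _⟩ rfl
  rfl

theorem finite_support_toFun (l : NPartition) : (Function.support l.toFun).Finite := by
  obtain ⟨N, hN⟩ := l.eventually_zero'
  exact (Set.finite_Iio N).subset fun i hi => not_le.mp fun hNi => hi (hN i hNi)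

theorem sum_le_size (l : NPartition) (s : Finset ℕ+) : ∑ i ∈ s, l.toFun i ≤ l.size := by
  rw [size, finsum_eq_sum _ l.finite_support_toFun]
  exact Finset.sum_le_sum_of_ne_zero fun i _ hi => by simpa using hi

theorem mul_toFun_le_size (l : NPartition) (i : ℕ+) : i * l.toFun i ≤ l.size :=
  calc (i : ℕ) * l.toFun i
    _ = (Finset.Icc 1 i).card • l.toFun i := by simp
    _ ≤ ∑ j ∈ Finset.Icc 1 i, l.toFun j :=
      Finset.card_nsmul_le_sum _ _ _ fun _ hj => l.antitone' (Finset.mem_Icc.mp hj).2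
    _ ≤ l.size := l.sum_le_size _

theorem toFun_eq_zero_of_size_lt (l : NPartition) {i : ℕ+} (hi : l.size < i) : l.toFun i = 0 := by
  by_contra hne
  have hle : (i : ℕ) ≤ i * l.toFun i := Nat.le_mul_of_pos_right _ (Nat.pos_of_ne_zero hne)
  exact hi.not_ge (hle.trans (l.mul_toFun_le_size i))

/-- The numbers `λ_i - i`, `i ≥ 1`: the beta-numbers of `λ`, shifted so that no choice of a number
of parts enters. They are the terms of `muSeq` that do not depend on `ν`. -/
def betaNumber (l : NPartition) (i : ℕ+) : ℤ := l.toFun i - (i : ℕ)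

theorem betaNumber_strictAnti (l : NPartition) : StrictAnti l.betaNumber := fun _ _ hij =>
  Int.sub_lt_sub_of_le_of_lt (mod_cast l.antitone' hij.le) (mod_cast hij)

theorem betaNumber_injective : Function.Injective betaNumber := fun _ _ h =>
  toFun_injective <| funext fun i => Nat.cast_injective (sub_left_injective (congrFun h i))

/-- The set of beta-numbers of a partition, by which a partition is compared with the unordered
values of `muSeq`. -/
def betaSet (l : NPartition) : Set ℤ := Set.range l.betaNumber

theorem betaSet_injective : Function.Injective betaSet := fun l l' h =>
  betaNumber_injective <| neg_injective <|
    (l.betaNumber_strictAnti.neg.range_inj l'.betaNumber_strictAnti.neg).mp <| by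
      simpa only [betaSet, Set.neg_range] using congrArg Neg.neg h

theorem mem_betaSet_of_lt_neg_size (l : NPartition) {z : ℤ} (hz : z < -l.size) :
    z ∈ l.betaSet := by
  obtain ⟨i, rfl⟩ : ∃ i : ℕ+, z = -(i : ℕ) := ⟨⟨z.natAbs, by omega⟩, by rw [PNat.mk_coe]; omega⟩
  refine ⟨i, ?_⟩
  rw [betaNumber, l.toFun_eq_zero_of_size_lt (by omega), Nat.cast_zero, zero_sub]

end NPartition

theorem muSeq_zero (ν : ℂ) (l : NPartition) : muSeq ν l 0 = ν - l.size :=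
  dif_pos rfl

theorem muSeq_coe (ν : ℂ) (l : NPartition) (i : ℕ+) : muSeq ν l i = l.betaNumber i := by
  simp [muSeq, NPartition.betaNumber, show (⟨i, i.pos⟩ : ℕ+) = i from rfl]

theorem range_muSeq (ν : ℂ) (l : NPartition) :
    Set.range (muSeq ν l) = insert (ν - l.size : ℂ) (Int.cast '' l.betaSet) := by
  ext w
  constructor
  · rintro ⟨i, rfl⟩
    rcases Nat.eq_zero_or_pos i with rfl | hi
    · exact .inl (muSeq_zero ν l)
    · exact .inr ⟨_, ⟨⟨i, hi⟩, rfl⟩, (muSeq_coe ν l ⟨i, hi⟩).symm⟩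
  · rintro (rfl | ⟨_, ⟨i, rfl⟩, rfl⟩)
    · exact ⟨0, muSeq_zero ν l⟩
    · exact ⟨i, muSeq_coe ν l i⟩

theorem intCast_preimage_range_muSeq {ν : ℂ} (hν : ∀ n : ℕ, ν ≠ n) (l : NPartition) :
    Int.cast ⁻¹' Set.range (muSeq ν l) = l.betaSet := by
  have mem_of_eq {z : ℤ} (hz : (z : ℂ) = ν - l.size) : z ∈ l.betaSet := by
    refine l.mem_betaSet_of_lt_neg_size (not_le.mp fun hle => ?_)
    obtain ⟨n, hn⟩ := Int.eq_ofNat_of_zero_le (neg_le_iff_add_nonneg.mp hle)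
    refine hν n ?_
    calc ν = ((z + l.size : ℤ) : ℂ) := by simp [hz]
      _ = n := by simp [hn]
  ext z
  simpa [range_muSeq] using mem_of_eq

theorem nuEquiv.range_muSeq_eq {ν : ℂ} {l l' : NPartition} (h : nuEquiv ν l l') :
    Set.range (muSeq ν l) = Set.range (muSeq ν l') := by
  obtain ⟨f, hf⟩ := h
  rw [← f.surjective.range_comp (muSeq ν l')]
  exact congrArg Set.range (funext hf)

theorem nuEquiv_trivial_of_not_nat_general (ν : ℂ) (hν : ∀ n : ℕ, ν ≠ (n : ℂ))
    (l l' : NPartition) (h : Set.range (muSeq ν l) = Set.range (muSeq ν l')) : l = l' := by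
  apply NPartition.betaSet_injective
  rw [← intCast_preimage_range_muSeq hν l, h, intCast_preimage_range_muSeq hν l']

/-- If `ν` is not a nonnegative integer then every `∼ν`-equivalence class of Young diagrams is
trivial: any two `ν`-equivalent partitions are equal. -/
theorem nuEquiv_trivial_of_not_nat (ν : ℂ) (hν : ∀ n : ℕ, ν ≠ (n : ℂ))
    (l l' : NPartition) (h : nuEquiv ν l l') : l = l' :=
  nuEquiv_trivial_of_not_nat_general ν hν l l' h.range_muSeq_eq
end

section
/- Let n ∈ ℕ and let λ be a partition with |λ| + λ_1 ≤ n. Let λ' be the partition with λ'_1 = n − |λ| + 1 and λ'_i = λ_i for i ≥ 2. Then for every partition μ: λ̃(n) ∈ I⁺_μ if and only if μ ∈ I⁺_λ and μ ∉ I⁺_{λ'}; that is, {μ : λ̃(n) ∈ I⁺_μ} = I⁺_λ \ I⁺_{λ'}. -/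
/-- `μ ∈ I⁺_λ`: `μ` is obtained from `λ` by adding boxes, no two in the same column, i.e.
`λ_i ≤ μ_i` and `μ_{i+1} ≤ λ_i` for all `i ≥ 1`. -/
def inIPlus (l m : NPartition) : Prop :=
  ∀ i : ℕ+, l.toFun i ≤ m.toFun i ∧ m.toFun (i + 1) ≤ l.toFun i

/-- The underlying function of the padded diagram `λ̃(n)`:
`λ̃(n)_1 = n − |λ|` and `λ̃(n)_{i+1} = λ_i` for `i ≥ 1`. -/
noncomputable def tildeFun (n : ℕ) (l : NPartition) : ℕ+ → ℕ := fun i =>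
  if i = 1 then n - l.size else l.toFun (i - 1)

/-- The underlying function of the diagram `λ'` with `λ'_1 = n − |λ| + 1` and `λ'_i = λ_i` for
`i ≥ 2`. -/
noncomputable def primeFun (n : ℕ) (l : NPartition) : ℕ+ → ℕ := fun i =>
  if i = 1 then n - l.size + 1 else l.toFun i

/-!
`μ ∈ I⁺_λ` means that the rows interlace: `μ_1 ≥ λ_1 ≥ μ_2 ≥ λ_2 ≥ ⋯`. In `λ̃(n)` the rows of `λ`
sit below a new first row, so `λ̃(n) ∈ I⁺_μ` extends this chain by one term on the left: it amounts
to `μ ∈ I⁺_λ` and `n - |λ| ≥ μ_1`. Passing from `λ` to `λ'` raises the first row, which weakens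
`λ_1 ≥ μ_2` and turns `μ_1 ≥ λ_1` into `μ_1 ≥ n - |λ| + 1`; so for `μ ∈ I⁺_λ` the condition
`μ ∈ I⁺_{λ'}` is exactly the failure of `n - |λ| ≥ μ_1`.
-/

theorem inIPlus_iff_head_le_and_interlacing {l m : NPartition} :
    inIPlus l m ↔
      l.toFun 1 ≤ m.toFun 1 ∧
        ∀ i : ℕ+, m.toFun (i + 1) ≤ l.toFun i ∧ l.toFun (i + 1) ≤ m.toFun (i + 1) := by
  refine ⟨fun h => ⟨(h 1).1, fun i => ⟨(h i).2, (h (i + 1)).1⟩⟩, fun ⟨head, tail⟩ i => ?_⟩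
  refine ⟨?_, (tail i).1⟩
  induction i using PNat.recOn with
  | one => exact head
  | succ i _ => exact (tail i).2

theorem inIPlus_iff_of_tail_eq {l c : NPartition}
    (htail : ∀ i : ℕ+, c.toFun (i + 1) = l.toFun i) (m : NPartition) :
    inIPlus m c ↔ inIPlus l m ∧ m.toFun 1 ≤ c.toFun 1 := by
  simp only [inIPlus_iff_head_le_and_interlacing (l := m), htail]
  exact and_comm

theorem inIPlus_iff_head_le_of_tail_eq_tail {l l' m : NPartition} (hhead : l.toFun 1 ≤ l'.toFun 1)
    (htail : ∀ i : ℕ+, l'.toFun (i + 1) = l.toFun (i + 1)) (hm : inIPlus l m) :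
    inIPlus l' m ↔ l'.toFun 1 ≤ m.toFun 1 := by
  refine ⟨fun h => (h 1).1, fun h i => ?_⟩
  induction i using PNat.recOn with
  | one => exact ⟨h, (hm 1).2.trans hhead⟩
  | succ i _ => simpa only [htail] using hm (i + 1)

theorem tildeFun_one (n : ℕ) (l : NPartition) : tildeFun n l 1 = n - l.size := if_pos rfl

theorem tildeFun_add_one (n : ℕ) (l : NPartition) (i : ℕ+) :
    tildeFun n l (i + 1) = l.toFun i := by
  simp [tildeFun, PNat.add_sub, (PNat.lt_add_left 1 i).ne']

theorem primeFun_one (n : ℕ) (l : NPartition) : primeFun n l 1 = n - l.size + 1 := if_pos rfl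

theorem primeFun_add_one (n : ℕ) (l : NPartition) (i : ℕ+) :
    primeFun n l (i + 1) = l.toFun (i + 1) :=
  if_neg (PNat.lt_add_left 1 i).ne'

theorem inIPlus_tilde_iff {n : ℕ} {l tl : NPartition} (htl : tl.toFun = tildeFun n l)
    (m : NPartition) :
    inIPlus m tl ↔ inIPlus l m ∧ m.toFun 1 ≤ n - l.size := by
  have head : tl.toFun 1 = n - l.size := by rw [htl, tildeFun_one]
  have tail (i : ℕ+) : tl.toFun (i + 1) = l.toFun i := by rw [htl, tildeFun_add_one]
  rw [inIPlus_iff_of_tail_eq tail, head]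

theorem inIPlus_prime_iff {n : ℕ} {l l' m : NPartition} (hl' : l'.toFun = primeFun n l)
    (hl : l.toFun 1 ≤ n - l.size) (hm : inIPlus l m) :
    inIPlus l' m ↔ n - l.size < m.toFun 1 := by
  have head : l'.toFun 1 = n - l.size + 1 := by rw [hl', primeFun_one]
  have tail (i : ℕ+) : l'.toFun (i + 1) = l.toFun (i + 1) := by rw [hl', primeFun_add_one]
  have head_le : l.toFun 1 ≤ l'.toFun 1 := head ▸ Nat.le_succ_of_le hl
  rw [inIPlus_iff_head_le_of_tail_eq_tail head_le tail hm, head, Nat.succ_le_iff]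

/-- For `|λ| + λ_1 ≤ n` and `λ'` as above: `{μ : λ̃(n) ∈ I⁺_μ} = I⁺_λ \ I⁺_{λ'}`. -/
theorem tilde_mem_IPlus_iff_sdiff (n : ℕ) (l l' tl : NPartition)
    (h : l.size + l.toFun 1 ≤ n)
    (hl' : l'.toFun = primeFun n l) (htl : tl.toFun = tildeFun n l) :
    ∀ m : NPartition, inIPlus m tl ↔ (inIPlus l m ∧ ¬ inIPlus l' m) := by
  intro m
  rw [inIPlus_tilde_iff htl, and_congr_right_iff]
  intro hm
  rw [inIPlus_prime_iff hl' (Nat.le_sub_of_add_le' h) hm, not_lt]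
end

section
/- Let U be a finite-dimensional complex vector space, V = ℂ ⊕ U with distinguished vector 𝟙 = (1,0), and n ∈ ℕ. Then there exists a ℂ-linear isomorphism Φ : V^{⊗n} → ⊕_{k=0}^{n} (U^{⊗k} ⊗ ℂ[Inj_k^n])^{S_k} which is equivariant for the S_n-actions on both sides and for the GL(U)-actions on both sides, and which sends 𝟙⊗𝟙⊗⋯⊗𝟙 to the canonical generator 1 of the summand (U^{⊗0} ⊗ ℂ[Inj_0^n])^{S_0} ≅ ℂ. -/
open scoped TensorProduct DirectSum

noncomputable section

/-- The permutation action `P_τ` of `τ ∈ S_k` on `U^{⊗k}`: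
`w₁ ⊗ ⋯ ⊗ w_k ↦ w_{τ⁻¹(1)} ⊗ ⋯ ⊗ w_{τ⁻¹(k)}`. -/
def permTP (U : Type) [AddCommGroup U] [Module ℂ U] (k : ℕ) (τ : Equiv.Perm (Fin k)) :
    (⨂[ℂ] _ : Fin k, U) →ₗ[ℂ] ⨂[ℂ] _ : Fin k, U :=
  (PiTensorProduct.reindex ℂ (fun _ : Fin k => U) τ).toLinearMap

/-- `ℂ[Inj_k^n]`: the free complex vector space on the set of injective maps
`{1,…,k} → {1,…,n}`. -/
abbrev InjSp (k n : ℕ) : Type := (Fin k ↪ Fin n) →₀ ℂ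

/-- The (diagonal) action of `τ ∈ S_k` on `U^{⊗k} ⊗ ℂ[Inj_k^n]`:
`τ · ((w₁⊗⋯⊗w_k) ⊗ f) = (w_{τ⁻¹(1)}⊗⋯⊗w_{τ⁻¹(k)}) ⊗ (f ∘ τ⁻¹)`. -/
def diagAct (U : Type) [AddCommGroup U] [Module ℂ U] (k n : ℕ) (τ : Equiv.Perm (Fin k)) :
    (⨂[ℂ] _ : Fin k, U) ⊗[ℂ] InjSp k n →ₗ[ℂ] (⨂[ℂ] _ : Fin k, U) ⊗[ℂ] InjSp k n :=
  TensorProduct.map (permTP U k τ)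
    (Finsupp.lmapDomain ℂ ℂ
      (fun f : Fin k ↪ Fin n => (τ⁻¹ : Equiv.Perm (Fin k)).toEmbedding.trans f))

/-- The subspace of `S_k`-invariants `(U^{⊗k} ⊗ ℂ[Inj_k^n])^{S_k}`. -/
def InvSp (U : Type) [AddCommGroup U] [Module ℂ U] (k n : ℕ) :
    Submodule ℂ ((⨂[ℂ] _ : Fin k, U) ⊗[ℂ] InjSp k n) :=
  ⨅ τ : Equiv.Perm (Fin k), LinearMap.eqLocus (diagAct U k n τ) LinearMap.id

/-- The action of `σ ∈ S_n` on `U^{⊗k} ⊗ ℂ[Inj_k^n]`: `w ⊗ f ↦ w ⊗ (σ ∘ f)`. -/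
def sActW (U : Type) [AddCommGroup U] [Module ℂ U] (k n : ℕ) (σ : Equiv.Perm (Fin n)) :
    (⨂[ℂ] _ : Fin k, U) ⊗[ℂ] InjSp k n →ₗ[ℂ] (⨂[ℂ] _ : Fin k, U) ⊗[ℂ] InjSp k n :=
  TensorProduct.map LinearMap.id
    (Finsupp.lmapDomain ℂ ℂ (fun f : Fin k ↪ Fin n => f.trans σ.toEmbedding))

/-- The diagonal action of `A ∈ End(U)` on `U^{⊗k} ⊗ ℂ[Inj_k^n]` (through `U^{⊗k}`). -/
def gActW (U : Type) [AddCommGroup U] [Module ℂ U] (k n : ℕ) (A : U →ₗ[ℂ] U) :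
    (⨂[ℂ] _ : Fin k, U) ⊗[ℂ] InjSp k n →ₗ[ℂ] (⨂[ℂ] _ : Fin k, U) ⊗[ℂ] InjSp k n :=
  TensorProduct.map (PiTensorProduct.map fun _ => A) LinearMap.id

/-- The diagonal action of `A ∈ End(U) ⊆ End(ℂ × U)` on `(ℂ × U)^{⊗n}` (acting as the
identity on the summand `ℂ`). -/
def gActV (U : Type) [AddCommGroup U] [Module ℂ U] (n : ℕ) (A : U →ₗ[ℂ] U) :
    (⨂[ℂ] _ : Fin n, (ℂ × U)) →ₗ[ℂ] ⨂[ℂ] _ : Fin n, (ℂ × U) :=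
  PiTensorProduct.map fun _ => (LinearMap.id : ℂ →ₗ[ℂ] ℂ).prodMap A

/-!
Expanding `v₁ ⊗ ⋯ ⊗ vₙ` along `V = ℂ𝟙 ⊕ U` gives one summand for each set `S` of positions that
carry `U`-parts. If `|S| = k`, this summand is recorded once for each of the `k!` injections `f`
with image `S`, namely as the `U`-parts read off in the order given by `f`, tensored with `f` and
scaled by the scalar parts outside `S`; the sum of these records is `S_k`-invariant. In the other
direction `w ⊗ f` puts `w` at the positions given by `f` and `𝟙` at all others. Recording and
reinserting counts every `S` exactly `k!` times, while reinserting and recording is `∑ τ, τ` over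
`τ ∈ S_k`, which is multiplication by `k!` on invariants. Both maps are natural in the positions and
in `U`, whence the equivariance.
-/

section Combinatorics

open Finset

variable {α β : Type*}

theorem exists_perm_trans_eq_of_range_eq {f g : α ↪ β} (h : Set.range g = Set.range f) :
    ∃ τ : Equiv.Perm α, τ.toEmbedding.trans f = g := by
  refine ⟨(Equiv.ofInjective g g.injective).trans
    ((Equiv.setCongr h).trans (Equiv.ofInjective f f.injective).symm), ?_⟩
  ext a
  simp [Equiv.apply_ofInjective_symm f.injective]

theorem perm_trans_embedding_injective (f : α ↪ β) :
    Function.Injective fun τ : Equiv.Perm α => τ.toEmbedding.trans f := fun σ τ h => by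
  ext a
  simpa using DFunLike.congr_fun h a

theorem exists_embedding_map_univ_eq [Fintype α] {S : Finset β} (hS : #S = Fintype.card α) :
    ∃ f : α ↪ β, univ.map f = S := by
  obtain ⟨e⟩ : Nonempty (α ≃ S) := Fintype.card_eq.mp (by simpa using hS.symm)
  refine ⟨e.toEmbedding.trans (Function.Embedding.subtype _), ?_⟩
  rw [← map_map, map_univ_equiv, univ_eq_attach, attach_map_val]

variable [Fintype α] [Fintype β] {N : Type*} [AddCommMonoid N]

theorem sum_embedding_eq_sum_perm [DecidableEq α] (f : α ↪ β) (H : (α ↪ β) → N)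
    (hH : ∀ g : α ↪ β, Set.range g ≠ Set.range f → H g = 0) :
    ∑ g, H g = ∑ τ : Equiv.Perm α, H (τ.toEmbedding.trans f) :=
  (Fintype.sum_of_injective _ (perm_trans_embedding_injective f) _ _
    (fun g hg => hH g fun h => hg (exists_perm_trans_eq_of_range_eq h)) fun _ => rfl).symm

theorem card_embedding_map_univ_eq [DecidableEq β] {S : Finset β} (hS : #S = Fintype.card α) :
    #{f : α ↪ β | univ.map f = S} = (Fintype.card α).factorial := by
  classical
  obtain ⟨f, rfl⟩ := exists_embedding_map_univ_eq hS
  have hperm (τ : Equiv.Perm α) : univ.map (τ.toEmbedding.trans f) = univ.map f := by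
    rw [← map_map, map_univ_equiv]
  rw [card_filter, sum_embedding_eq_sum_perm f]
  · simp [hperm, Fintype.card_perm]
  · intro g hg
    rw [if_neg fun h => hg (by simpa using congrArg (fun S : Finset β => (S : Set β)) h)]

variable (α) in
theorem sum_embedding_map_univ (G : Finset β → N) :
    ∑ f : α ↪ β, G (univ.map f)
      = (Fintype.card α).factorial • ∑ S ∈ powersetCard (Fintype.card α) univ, G S := by
  classical
  have hmaps : ∀ f ∈ (univ : Finset (α ↪ β)),
      univ.map f ∈ powersetCard (Fintype.card α) univ := fun f _ => by simp [mem_powersetCard]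
  rw [← sum_fiberwise_of_maps_to' hmaps, smul_sum]
  refine sum_congr rfl fun S hS => ?_
  rw [sum_const, card_embedding_map_univ_eq (mem_powersetCard.mp hS).2]

end Combinatorics

section Positions

open PiTensorProduct

variable {R M N α α' β β' : Type*} [CommSemiring R] [AddCommMonoid M] [Module R M]
  [AddCommMonoid N] [Module R N] [Fintype α] [Fintype α'] [DecidableEq β]

/-- The positions `β`, split into those filled by the injection `f` and the remaining ones. -/
def sumComplRange (f : α ↪ β) : α ⊕ {b // b ∉ Set.range f} ≃ β :=
  ((Equiv.ofInjective f f.injective).sumCongr (Equiv.refl _)).trans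
    (Equiv.sumCompl (· ∈ Set.range f))

@[simp]
theorem sumComplRange_inl (f : α ↪ β) (a : α) : sumComplRange f (Sum.inl a) = f a := rfl

@[simp]
theorem sumComplRange_inr (f : α ↪ β) (b : {b // b ∉ Set.range f}) :
    sumComplRange f (Sum.inr b) = b := rfl

/-- Place a tensor over `M` at the positions in the range of `f`, and `(1, 0)` at all others. -/
def extendTensor (f : α ↪ β) : (⨂[R] _ : α, M) →ₗ[R] ⨂[R] _ : β, R × M :=
  (reindex R (fun _ => R × M) (sumComplRange f)).toLinearMap ∘ₗ
    (tmulEquiv R (R × M)).toLinearMap ∘ₗ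
    (TensorProduct.mk R _ _).flip (tprod R fun _ => (1, 0)) ∘ₗ
    map fun _ => LinearMap.inr R R M

theorem extendTensor_tprod (f : α ↪ β) (w : α → M) :
    extendTensor f (tprod R w)
      = tprod R (Function.extend f (fun a => ((0 : R), w a)) fun _ => (1, 0)) := by
  simp only [extendTensor, LinearMap.comp_apply, map_tprod, LinearMap.flip_apply,
    TensorProduct.mk_apply, LinearEquiv.coe_coe, tmulEquiv_apply, reindex_tprod,
    LinearMap.inr_apply]
  congr 1
  ext1 b
  obtain ⟨a | b, rfl⟩ := (sumComplRange f).surjective b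
  · rw [Equiv.symm_apply_apply, sumComplRange_inl, f.injective.extend_apply, Sum.elim_inl]
  · rw [Equiv.symm_apply_apply, sumComplRange_inr, Function.extend_apply' _ _ _ b.2, Sum.elim_inr]

variable [Fintype β]

/-- The `f`-component of a tensor over `R × M`: project to `M` at the positions in the range of
`f`, and to `R` at all others. -/
def restrictTensor (f : α ↪ β) : (⨂[R] _ : β, R × M) →ₗ[R] ⨂[R] _ : α, M :=
  (TensorProduct.rid R _).toLinearMap ∘ₗ
    TensorProduct.map (map fun _ => LinearMap.snd R R M)
      ((constantBaseRingEquiv _ R).toLinearMap ∘ₗ map fun _ => LinearMap.fst R R M) ∘ₗ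
    (tmulEquiv R (R × M)).symm.toLinearMap ∘ₗ
    (reindex R (fun _ => R × M) (sumComplRange f).symm).toLinearMap

theorem restrictTensor_tprod (f : α ↪ β) (v : β → R × M) :
    restrictTensor f (tprod R v)
      = (∏ b : {b // b ∉ Set.range f}, (v b).1) • tprod R fun a => (v (f a)).2 := by
  simp [restrictTensor]

theorem restrictTensor_trans_comp_reindex [Fintype β'] [DecidableEq β'] (f : α ↪ β) (e : β ≃ β') :
    restrictTensor (f.trans e.toEmbedding) ∘ₗ (reindex R (fun _ => R × M) e).toLinearMap
      = restrictTensor f := by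
  ext v
  have hrange (b : β) : b ∉ Set.range f ↔ e b ∉ Set.range (f.trans e.toEmbedding) := by simp
  have hprod : ∏ b : {b // b ∉ Set.range (f.trans e.toEmbedding)}, (v (e.symm b)).1
      = ∏ b : {b // b ∉ Set.range f}, (v b).1 :=
    (Fintype.prod_equiv (e.subtypeEquiv hrange) _ _ fun b => by simp).symm
  simp only [LinearMap.compMultilinearMap_apply, LinearMap.comp_apply, LinearEquiv.coe_coe,
    reindex_tprod, restrictTensor_tprod, hprod]
  congr 2
  ext1 a
  rw [Function.Embedding.trans_apply, Equiv.coe_toEmbedding, Equiv.symm_apply_apply]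

theorem reindex_comp_restrictTensor (f : α ↪ β) (e : α ≃ α') :
    (reindex R (fun _ => M) e).toLinearMap ∘ₗ restrictTensor f
      = restrictTensor (e.symm.toEmbedding.trans f) := by
  ext v
  have hrange (b : β) : b ∉ Set.range f ↔ b ∉ Set.range (e.symm.toEmbedding.trans f) := by
    simp [e.symm.exists_congr_left]
  have hprod : ∏ b : {b // b ∉ Set.range f}, (v b).1
      = ∏ b : {b // b ∉ Set.range (e.symm.toEmbedding.trans f)}, (v b).1 :=
    Fintype.prod_equiv (Equiv.subtypeEquivRight hrange) _ _ fun b => rfl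
  simp only [LinearMap.compMultilinearMap_apply, LinearMap.comp_apply, LinearEquiv.coe_coe,
    map_smul, reindex_tprod, restrictTensor_tprod, hprod]
  rfl

theorem restrictTensor_comp_map (f : α ↪ β) (A : M →ₗ[R] N) :
    restrictTensor f ∘ₗ map (fun _ => (LinearMap.id : R →ₗ[R] R).prodMap A)
      = map (fun _ => A) ∘ₗ restrictTensor f := by
  ext v
  simp [restrictTensor_tprod]

theorem restrictTensor_comp_extendTensor_of_range_ne {f : α ↪ β} {g : α' ↪ β}
    (h : Set.range g ≠ Set.range f) :
    restrictTensor g ∘ₗ extendTensor (R := R) (M := M) f = 0 := by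
  ext w
  rw [LinearMap.compMultilinearMap_apply, LinearMap.comp_apply, extendTensor_tprod,
    restrictTensor_tprod]
  by_cases hfg : Set.range f ⊆ Set.range g
  · obtain ⟨_, ⟨a, rfl⟩, ha⟩ := Set.not_subset.mp fun hgf => h (hgf.antisymm hfg)
    rw [MultilinearMap.map_coord_zero _ a, smul_zero]
    · rfl
    · rw [Function.extend_apply' _ _ _ ha]
  · obtain ⟨_, ⟨a, rfl⟩, ha⟩ := Set.not_subset.mp hfg
    rw [Finset.prod_eq_zero (Finset.mem_univ ⟨f a, ha⟩), zero_smul]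
    · rfl
    · rw [f.injective.extend_apply]

theorem restrictTensor_comp_extendTensor (f : α ↪ β) :
    restrictTensor f ∘ₗ extendTensor (R := R) (M := M) f = LinearMap.id := by
  ext w
  have hone (b : {b // b ∉ Set.range f}) :
      (Function.extend f (fun a => ((0 : R), w a)) (fun _ => (1, 0)) b).1 = 1 := by
    rw [Function.extend_apply' _ _ _ b.2]
  simp [extendTensor_tprod, restrictTensor_tprod, hone, f.injective.extend_apply]

theorem restrictTensor_perm_comp_extendTensor (f : α ↪ β) (τ : Equiv.Perm α) :
    restrictTensor (τ.symm.toEmbedding.trans f) ∘ₗ extendTensor (R := R) (M := M) f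
      = (reindex R (fun _ => M) τ).toLinearMap := by
  rw [← reindex_comp_restrictTensor, LinearMap.comp_assoc, restrictTensor_comp_extendTensor,
    LinearMap.comp_id]

/-- The summand of `⨂ₜ b, v b` that takes the `M`-parts at the positions in `S` and the scalar parts
at all others. -/
def splitTensor (v : β → R × M) (S : Finset β) : ⨂[R] _ : β, R × M :=
  tprod R (S.piecewise (fun b => (0, (v b).2)) fun b => ((v b).1, 0))

theorem sum_splitTensor (v : β → R × M) : ∑ S, splitTensor v S = tprod R v := by
  have hv : v = (fun b => ((0 : R), (v b).2)) + fun b => ((v b).1, (0 : M)) := by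
    ext b <;> simp
  conv_rhs => rw [hv, MultilinearMap.map_add_univ]
  rfl

theorem extendTensor_restrictTensor_tprod (f : α ↪ β) (v : β → R × M) :
    extendTensor f (restrictTensor f (tprod R v)) = splitTensor v (Finset.univ.map f) := by
  have hprod : ∏ b : {b // b ∉ Set.range f}, (v b).1 = ∏ b ∈ (Finset.univ.map f)ᶜ, (v b).1 :=
    (Finset.prod_subtype _ (fun b => by simp) fun b => (v b).1).symm
  rw [restrictTensor_tprod, map_smul, extendTensor_tprod, hprod,
    ← MultilinearMap.map_piecewise_smul, splitTensor]
  congr 1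
  ext1 b
  by_cases hb : ∃ a, f a = b
  · obtain ⟨a, rfl⟩ := hb
    simp [f.injective.extend_apply]
  · have hmem : b ∉ Finset.univ.map f := by simpa using hb
    simp [Finset.piecewise, hmem, Function.extend_apply' _ _ _ hb]

end Positions

section Embeddings

open PiTensorProduct Finset

variable {R M N α α' β β' : Type*} [CommSemiring R] [AddCommMonoid M] [Module R M]
  [AddCommMonoid N] [Module R N]

theorem tmul_single_hom_ext {ι : Type*} {F G : M ⊗[R] (ι →₀ R) →ₗ[R] N}
    (h : ∀ (m : M) (i : ι), F (m ⊗ₜ Finsupp.single i 1) = G (m ⊗ₜ Finsupp.single i 1)) : F = G := by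
  ext m i
  exact h m i

variable (R M β) in
/-- The action `w ⊗ f ↦ (w ∘ e⁻¹) ⊗ (f ∘ e⁻¹)` of a relabelling `e` of the tensor factors; for
`e ∈ S_k` this is the diagonal action. -/
def relabel (e : α ≃ α') :
    (⨂[R] _ : α, M) ⊗[R] ((α ↪ β) →₀ R) →ₗ[R] (⨂[R] _ : α', M) ⊗[R] ((α' ↪ β) →₀ R) :=
  TensorProduct.map (reindex R (fun _ => M) e).toLinearMap
    (Finsupp.lmapDomain R R fun f : α ↪ β => e.symm.toEmbedding.trans f)

theorem relabel_tmul_single (e : α ≃ α') (w : ⨂[R] _ : α, M) (f : α ↪ β) :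
    relabel R M β e (w ⊗ₜ Finsupp.single f 1)
      = reindex R (fun _ => M) e w ⊗ₜ Finsupp.single (e.symm.toEmbedding.trans f) 1 := by
  simp [relabel]

variable [Fintype α] [Fintype α'] [DecidableEq β]

variable (R M α β) in
/-- The linear map sending `w ⊗ f` to `extendTensor f w`. -/
def extendAll : (⨂[R] _ : α, M) ⊗[R] ((α ↪ β) →₀ R) →ₗ[R] ⨂[R] _ : β, R × M :=
  TensorProduct.lift (Finsupp.lift _ R (α ↪ β) fun f => extendTensor f).flip

theorem extendAll_tmul_single (w : ⨂[R] _ : α, M) (f : α ↪ β) :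
    extendAll R M α β (w ⊗ₜ[R] Finsupp.single f 1) = extendTensor f w := by
  simp [extendAll]

variable [Fintype β]

variable (R M α β) in
/-- All components of a tensor over `R × M`, indexed by the injections `α ↪ β`. -/
def restrictAll : (⨂[R] _ : β, R × M) →ₗ[R] (⨂[R] _ : α, M) ⊗[R] ((α ↪ β) →₀ R) :=
  ∑ f : α ↪ β, (TensorProduct.mk R _ _).flip (Finsupp.single f 1) ∘ₗ restrictTensor f

theorem restrictAll_apply (x : ⨂[R] _ : β, R × M) :
    restrictAll R M α β x = ∑ f : α ↪ β, restrictTensor f x ⊗ₜ[R] Finsupp.single f 1 := by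
  simp [restrictAll]

theorem relabel_comp_restrictAll (e : α ≃ α') :
    relabel R M β e ∘ₗ restrictAll R M α β = restrictAll R M α' β := by
  refine LinearMap.ext fun x => ?_
  simp only [LinearMap.comp_apply, restrictAll_apply, map_sum, relabel_tmul_single]
  refine Fintype.sum_equiv (e.embeddingCongr (Equiv.refl β)) _ _ fun f => ?_
  congr 1
  exact LinearMap.congr_fun (reindex_comp_restrictTensor f e) x

theorem restrictAll_comp_reindex [Fintype β'] [DecidableEq β'] (e : β ≃ β') :
    restrictAll R M α β' ∘ₗ (reindex R (fun _ => R × M) e).toLinearMap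
      = TensorProduct.map LinearMap.id
          (Finsupp.lmapDomain R R fun f : α ↪ β => f.trans e.toEmbedding) ∘ₗ
        restrictAll R M α β := by
  refine LinearMap.ext fun x => ?_
  simp only [LinearMap.comp_apply, restrictAll_apply, map_sum, TensorProduct.map_tmul,
    Finsupp.lmapDomain_apply, Finsupp.mapDomain_single, LinearMap.id_apply]
  refine (Fintype.sum_equiv ((Equiv.refl α).embeddingCongr e) _ _ fun f => ?_).symm
  rw [← restrictTensor_trans_comp_reindex f e]
  rfl

theorem restrictAll_comp_map (A : M →ₗ[R] N) :
    restrictAll R N α β ∘ₗ PiTensorProduct.map (fun _ => (LinearMap.id : R →ₗ[R] R).prodMap A)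
      = TensorProduct.map (PiTensorProduct.map fun _ => A) LinearMap.id ∘ₗ restrictAll R M α β := by
  refine LinearMap.ext fun x => ?_
  simp only [LinearMap.comp_apply, restrictAll_apply, map_sum, TensorProduct.map_tmul,
    LinearMap.id_apply]
  simp only [← LinearMap.comp_apply, restrictTensor_comp_map]

theorem restrictAll_comp_extendAll_of_card_ne (h : Fintype.card α' ≠ Fintype.card α) :
    restrictAll R M α' β ∘ₗ extendAll R M α β = 0 := by
  have hrange (f : α ↪ β) (g : α' ↪ β) : Set.range g ≠ Set.range f := fun hgf =>
    h <| by simpa [Set.ncard_range_of_injective, f.injective, g.injective]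
      using congrArg Set.ncard hgf
  refine tmul_single_hom_ext fun w f => ?_
  rw [LinearMap.comp_apply, extendAll_tmul_single, restrictAll_apply]
  refine sum_eq_zero fun g _ => ?_
  rw [← LinearMap.comp_apply, restrictTensor_comp_extendTensor_of_range_ne (hrange f g),
    LinearMap.zero_apply, TensorProduct.zero_tmul]

theorem restrictAll_comp_extendAll [DecidableEq α] :
    restrictAll R M α β ∘ₗ extendAll R M α β = ∑ τ : Equiv.Perm α, relabel R M β τ := by
  refine tmul_single_hom_ext fun w f => ?_
  rw [LinearMap.comp_apply, extendAll_tmul_single, restrictAll_apply, LinearMap.sum_apply,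
    sum_embedding_eq_sum_perm f]
  · refine Fintype.sum_equiv (Equiv.inv _) _ _ fun τ => ?_
    have hτ : reindex R (fun _ => M) τ⁻¹ w
        = restrictTensor (τ.toEmbedding.trans f) (extendTensor f w) :=
      (LinearMap.congr_fun (restrictTensor_perm_comp_extendTensor f τ⁻¹) w).symm
    rw [Equiv.inv_apply, relabel_tmul_single, hτ]
    rfl
  · intro g hg
    rw [← LinearMap.comp_apply, restrictTensor_comp_extendTensor_of_range_ne hg,
      LinearMap.zero_apply, TensorProduct.zero_tmul]

theorem extendAll_restrictAll_tprod (v : β → R × M) :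
    extendAll R M α β (restrictAll R M α β (tprod R v))
      = (Fintype.card α).factorial •
          ∑ S ∈ powersetCard (Fintype.card α) univ, splitTensor v S := by
  simp only [restrictAll_apply, map_sum, extendAll_tmul_single, extendTensor_restrictTensor_tprod]
  exact sum_embedding_map_univ α (splitTensor v)

theorem restrictAll_tprod_one_of_nonempty [Nonempty α] :
    restrictAll R M α β (tprod R fun _ => (1, 0)) = 0 := by
  obtain ⟨a⟩ := ‹Nonempty α›
  rw [restrictAll_apply]
  refine sum_eq_zero fun f _ => ?_
  rw [restrictTensor_tprod, MultilinearMap.map_coord_zero _ a rfl, smul_zero,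
    TensorProduct.zero_tmul]

theorem restrictAll_tprod_one_of_isEmpty [IsEmpty α] :
    restrictAll R M α β (tprod R fun _ => (1, 0))
      = tprod R isEmptyElim ⊗ₜ[R] Finsupp.single Function.Embedding.ofIsEmpty 1 := by
  rw [restrictAll_apply, Fintype.sum_unique, restrictTensor_tprod, prod_const_one, one_smul]
  congr 2
  exact Subsingleton.elim _ _

theorem sum_inv_factorial_smul_extendAll_restrictAll {K V : Type*} [Semifield K] [CharZero K]
    [AddCommMonoid V] [Module K V] (x : ⨂[K] _ : β, K × V) :
    ∑ k ∈ range (Fintype.card β + 1),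
      (k.factorial : K)⁻¹ • extendAll K V (Fin k) β (restrictAll K V (Fin k) β x) = x := by
  suffices h : ∑ k ∈ range (Fintype.card β + 1),
      (k.factorial : K)⁻¹ • (extendAll K V (Fin k) β ∘ₗ restrictAll K V (Fin k) β)
        = LinearMap.id by
    simpa using LinearMap.congr_fun h x
  ext v
  have hk (k : ℕ) : (k.factorial : K)⁻¹ •
      extendAll K V (Fin k) β (restrictAll K V (Fin k) β (tprod K v))
        = ∑ S ∈ powersetCard k univ, splitTensor v S := by
    rw [extendAll_restrictAll_tprod, Fintype.card_fin, ← Nat.cast_smul_eq_nsmul K,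
      inv_smul_smul₀ (Nat.cast_ne_zero.mpr k.factorial_ne_zero)]
  simp only [LinearMap.compMultilinearMap_apply, LinearMap.sum_apply, LinearMap.smul_apply,
    LinearMap.comp_apply, LinearMap.id_apply, hk]
  rw [← sum_splitTensor, ← powerset_univ, sum_powerset, card_univ]

end Embeddings

section Decomposition

variable {U : Type} [AddCommGroup U] [Module ℂ U] {k n : ℕ}

theorem mem_invSp {x : (⨂[ℂ] _ : Fin k, U) ⊗[ℂ] InjSp k n} :
    x ∈ InvSp U k n ↔ ∀ τ, relabel ℂ U (Fin n) τ x = x :=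
  Submodule.mem_iInf _

theorem restrictAll_mem_invSp (x : ⨂[ℂ] _ : Fin n, ℂ × U) :
    restrictAll ℂ U (Fin k) (Fin n) x ∈ InvSp U k n :=
  mem_invSp.mpr fun τ => LinearMap.congr_fun (relabel_comp_restrictAll τ) x

variable (U n) in
/-- The components of a tensor over `ℂ × U`, as a family of invariants. -/
def toInvariants : (⨂[ℂ] _ : Fin n, ℂ × U) →ₗ[ℂ] Π k : Fin (n + 1), InvSp U k n :=
  LinearMap.pi fun _ => (restrictAll ℂ U _ _).codRestrict _ restrictAll_mem_invSp

variable (U n) in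
/-- The inverse of `toInvariants`. The factor `1 / k!` makes up for the `k!` injections that fill a
given set of `k` positions. -/
def ofInvariants : (Π k : Fin (n + 1), InvSp U k n) →ₗ[ℂ] ⨂[ℂ] _ : Fin n, ℂ × U :=
  ∑ k : Fin (n + 1), ((k : ℕ).factorial : ℂ)⁻¹ •
    extendAll ℂ U (Fin k) (Fin n) ∘ₗ (InvSp U k n).subtype ∘ₗ LinearMap.proj k

theorem restrictAll_extendAll_of_mem_invSp {x : (⨂[ℂ] _ : Fin k, U) ⊗[ℂ] InjSp k n}
    (hx : x ∈ InvSp U k n) :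
    (k.factorial : ℂ)⁻¹ •
      restrictAll ℂ U (Fin k) (Fin n) (extendAll ℂ U (Fin k) (Fin n) x) = x := by
  rw [← LinearMap.comp_apply, restrictAll_comp_extendAll, LinearMap.sum_apply]
  simp only [mem_invSp.mp hx, Finset.sum_const, Finset.card_univ, Fintype.card_perm,
    Fintype.card_fin]
  rw [← Nat.cast_smul_eq_nsmul ℂ, inv_smul_smul₀ (Nat.cast_ne_zero.mpr k.factorial_ne_zero)]

theorem coe_toInvariants_apply (x : ⨂[ℂ] _ : Fin n, ℂ × U) (k : Fin (n + 1)) :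
    (toInvariants U n x k : (⨂[ℂ] _ : Fin k, U) ⊗[ℂ] InjSp k n)
      = restrictAll ℂ U (Fin k) (Fin n) x := rfl

theorem toInvariants_ofInvariants (y : Π k : Fin (n + 1), InvSp U k n) :
    toInvariants U n (ofInvariants U n y) = y := by
  ext l : 2
  have hne (k : Fin (n + 1)) (hk : k ≠ l) :
      restrictAll ℂ U (Fin l) (Fin n) (extendAll ℂ U (Fin k) (Fin n) (y k)) = 0 :=
    LinearMap.congr_fun
      (restrictAll_comp_extendAll_of_card_ne (by simpa [Fin.ext_iff] using hk.symm)) _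
  rw [coe_toInvariants_apply]
  simp only [ofInvariants, LinearMap.sum_apply, LinearMap.smul_apply, LinearMap.comp_apply,
    Submodule.subtype_apply, LinearMap.proj_apply, map_sum, map_smul]
  rw [Finset.sum_eq_single l (fun k _ hk => by rw [hne k hk, smul_zero]) (by simp)]
  exact restrictAll_extendAll_of_mem_invSp (y l).2

theorem ofInvariants_toInvariants (x : ⨂[ℂ] _ : Fin n, ℂ × U) :
    ofInvariants U n (toInvariants U n x) = x := by
  have h := sum_inv_factorial_smul_extendAll_restrictAll x
  rw [Fintype.card_fin, Finset.sum_range] at h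
  simpa [ofInvariants, toInvariants] using h

variable (U n) in
/-- The decomposition `(ℂ × U)^{⊗n} ≅ ⊕_k (U^{⊗k} ⊗ ℂ[Inj_k^n])^{S_k}`. -/
def tensorPowerEquiv :
    (⨂[ℂ] _ : Fin n, ℂ × U) ≃ₗ[ℂ] ⨁ k : Fin (n + 1), InvSp U (k : ℕ) n :=
  LinearEquiv.ofLinearMap (toInvariants U n) (ofInvariants U n)
      (LinearMap.ext toInvariants_ofInvariants) (LinearMap.ext ofInvariants_toInvariants) ≪≫ₗ
    (DirectSum.linearEquivFunOnFintype ℂ (Fin (n + 1)) fun k => InvSp U (k : ℕ) n).symm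

theorem coe_tensorPowerEquiv_apply (x : ⨂[ℂ] _ : Fin n, ℂ × U) (k : Fin (n + 1)) :
    (tensorPowerEquiv U n x k : (⨂[ℂ] _ : Fin k, U) ⊗[ℂ] InjSp k n)
      = restrictAll ℂ U (Fin k) (Fin n) x := rfl

end Decomposition

theorem tensor_power_decomposition_general (U : Type) [AddCommGroup U] [Module ℂ U] (n : ℕ) :
    ∃ Φ : (⨂[ℂ] _ : Fin n, (ℂ × U)) ≃ₗ[ℂ] ⨁ k : Fin (n + 1), ↥(InvSp U (k : ℕ) n),
      (∀ (σ : Equiv.Perm (Fin n)) (x : ⨂[ℂ] _ : Fin n, (ℂ × U)) (k : Fin (n + 1)),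
        ((Φ (permTP (ℂ × U) n σ x)) k : (⨂[ℂ] _ : Fin (k : ℕ), U) ⊗[ℂ] InjSp (k : ℕ) n)
          = sActW U (k : ℕ) n σ ((Φ x) k : _)) ∧
      (∀ (A : U →ₗ[ℂ] U) (x : ⨂[ℂ] _ : Fin n, (ℂ × U)) (k : Fin (n + 1)),
        ((Φ (gActV U n A x)) k : (⨂[ℂ] _ : Fin (k : ℕ), U) ⊗[ℂ] InjSp (k : ℕ) n)
          = gActW U (k : ℕ) n A ((Φ x) k : _)) ∧
      (((Φ (PiTensorProduct.tprod ℂ fun _ : Fin n => ((1 : ℂ), (0 : U))))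
            ⟨0, n.succ_pos⟩ : (⨂[ℂ] _ : Fin 0, U) ⊗[ℂ] InjSp 0 n)
          = (PiTensorProduct.tprod ℂ (fun i : Fin 0 => i.elim0)) ⊗ₜ[ℂ]
              Finsupp.single (Function.Embedding.ofIsEmpty : Fin 0 ↪ Fin n) 1) ∧
      (∀ k : Fin (n + 1), k ≠ ⟨0, n.succ_pos⟩ →
        (Φ (PiTensorProduct.tprod ℂ fun _ : Fin n => ((1 : ℂ), (0 : U)))) k = 0) := by
  refine ⟨tensorPowerEquiv U n, fun σ x k => ?_, fun A x k => ?_, ?_,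
    fun k hk => Subtype.ext ?_⟩ <;>
    simp only [coe_tensorPowerEquiv_apply]
  · exact LinearMap.congr_fun (restrictAll_comp_reindex σ) x
  · exact LinearMap.congr_fun (restrictAll_comp_map A) x
  · exact restrictAll_tprod_one_of_isEmpty
  · have : Nonempty (Fin k) := Fin.pos_iff_nonempty.mp (Fin.pos_iff_ne_zero.mpr hk)
    exact restrictAll_tprod_one_of_nonempty

/-- For a split unital vector space `V = ℂ𝟙 ⊕ U` (realized as `V = ℂ × U`, `𝟙 = (1,0)`) there
is a linear isomorphism `V^{⊗n} ≅ ⊕_{k=0}^{n} (U^{⊗k} ⊗ ℂ[Inj_k^n])^{S_k}` which is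
equivariant for the `S_n`-actions and the `GL(U)`-actions on both sides, and sends
`𝟙 ⊗ ⋯ ⊗ 𝟙` to the canonical generator `1` of the summand `k = 0`. -/
theorem tensor_power_decomposition (U : Type) [AddCommGroup U] [Module ℂ U]
    [FiniteDimensional ℂ U] (n : ℕ) :
    ∃ Φ : (⨂[ℂ] _ : Fin n, (ℂ × U)) ≃ₗ[ℂ] ⨁ k : Fin (n + 1), ↥(InvSp U (k : ℕ) n),
      (∀ (σ : Equiv.Perm (Fin n)) (x : ⨂[ℂ] _ : Fin n, (ℂ × U)) (k : Fin (n + 1)),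
        ((Φ (permTP (ℂ × U) n σ x)) k : (⨂[ℂ] _ : Fin (k : ℕ), U) ⊗[ℂ] InjSp (k : ℕ) n)
          = sActW U (k : ℕ) n σ ((Φ x) k : _)) ∧
      (∀ (A : LinearMap.GeneralLinearGroup ℂ U) (x : ⨂[ℂ] _ : Fin n, (ℂ × U))
          (k : Fin (n + 1)),
        ((Φ (gActV U n A.val x)) k : (⨂[ℂ] _ : Fin (k : ℕ), U) ⊗[ℂ] InjSp (k : ℕ) n)
          = gActW U (k : ℕ) n A.val ((Φ x) k : _)) ∧
      (((Φ (PiTensorProduct.tprod ℂ fun _ : Fin n => ((1 : ℂ), (0 : U))))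
            ⟨0, n.succ_pos⟩ : (⨂[ℂ] _ : Fin 0, U) ⊗[ℂ] InjSp 0 n)
          = (PiTensorProduct.tprod ℂ (fun i : Fin 0 => i.elim0)) ⊗ₜ[ℂ]
              Finsupp.single (Function.Embedding.ofIsEmpty : Fin 0 ↪ Fin n) 1) ∧
      (∀ k : Fin (n + 1), k ≠ ⟨0, n.succ_pos⟩ →
        (Φ (PiTensorProduct.tprod ℂ fun _ : Fin n => ((1 : ℂ), (0 : U)))) k = 0) := by
  obtain ⟨Φ, hperm, hlin, hone⟩ := tensor_power_decomposition_general U n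
  exact ⟨Φ, hperm, fun A => hlin A.val, hone⟩
end
end
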